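/- arXiv:math-ph/0305046 — 4 statements merged into one kernel-verified Lean document; each statement's English description precedes it below -/
import Mathlib

section
/- Let Ω ⊆ ℝ³ be open, let ν : Ω → ℂ be continuous, and let β = β₁e₁ + β₂e₂ + β₃e₃ be a constant purely vectorial biquaternion with β² ≠ 0 (i.e. β is not a zero divisor), and let λ ∈ ℂ satisfy λ² = −(β₁² + β₂² + β₃²), λ ≠ 0. Define S^± f := (1/(2λ))·f·(λ ± β) and P₁^± f := ½ f(1 ± ie₁). Then a differentiable function f : Ω → ℍ(ℂ) satisfies Df + νf + fβ = 0 on Ω if and only if the four functions f₁ := P₁⁺S⁺f, f₂ := P₁⁻S⁺f, f₃ := P₁⁺S⁻f, f₄ := P₁⁻S⁻f satisfy respectively Df₁ + f₁·((ν+λ)ie₁) = 0, Df₂ − f₂·((ν+λ)ie₁) = 0, Df₃ + f₃·((ν−λ)ie₁) = 0, Df₄ − f₄·((ν−λ)ie₁) = 0 on Ω; moreover in that case f = f₁ + f₂ + f₃ + f₄. -/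
noncomputable section

abbrev HC := Quaternion ℂ

def e1 : HC := ⟨0, 1, 0, 0⟩
def e2 : HC := ⟨0, 0, 1, 0⟩
def e3 : HC := ⟨0, 0, 0, 1⟩

def pd (k : Fin 3) (g : (Fin 3 → ℝ) → ℂ) (x : Fin 3 → ℝ) : ℂ :=
  fderiv ℝ g x (Pi.single k 1)

def lap (g : (Fin 3 → ℝ) → ℂ) (x : Fin 3 → ℝ) : ℂ :=
  pd 0 (pd 0 g) x + pd 1 (pd 1 g) x + pd 2 (pd 2 g) x

def pdq (k : Fin 3) (f : (Fin 3 → ℝ) → HC) (x : Fin 3 → ℝ) : HC :=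
  ⟨pd k (fun y => (f y).re) x, pd k (fun y => (f y).imI) x,
   pd k (fun y => (f y).imJ) x, pd k (fun y => (f y).imK) x⟩

def Dq (f : (Fin 3 → ℝ) → HC) (x : Fin 3 → ℝ) : HC :=
  e1 * pdq 0 f x + e2 * pdq 1 f x + e3 * pdq 2 f x

def lapq (f : (Fin 3 → ℝ) → HC) (x : Fin 3 → ℝ) : HC :=
  ⟨lap (fun y => (f y).re) x, lap (fun y => (f y).imI) x,
   lap (fun y => (f y).imJ) x, lap (fun y => (f y).imK) x⟩

def QDiffOn (f : (Fin 3 → ℝ) → HC) (Ω : Set (Fin 3 → ℝ)) : Prop :=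
  DifferentiableOn ℝ (fun y => (f y).re) Ω ∧ DifferentiableOn ℝ (fun y => (f y).imI) Ω ∧
  DifferentiableOn ℝ (fun y => (f y).imJ) Ω ∧ DifferentiableOn ℝ (fun y => (f y).imK) Ω

def QC2On (f : (Fin 3 → ℝ) → HC) (Ω : Set (Fin 3 → ℝ)) : Prop :=
  ContDiffOn ℝ 2 (fun y => (f y).re) Ω ∧ ContDiffOn ℝ 2 (fun y => (f y).imI) Ω ∧
  ContDiffOn ℝ 2 (fun y => (f y).imJ) Ω ∧ ContDiffOn ℝ 2 (fun y => (f y).imK) Ω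


/-- Right multiplication projections `S^± f = (1/(2λ)) f (λ ± β)`. -/
def Sp (lam : ℂ) (β : HC) (f : (Fin 3 → ℝ) → HC) : (Fin 3 → ℝ) → HC :=
  fun x => ((2 * lam)⁻¹ : ℂ) • (f x * ((lam : HC) + β))

def Sm (lam : ℂ) (β : HC) (f : (Fin 3 → ℝ) → HC) : (Fin 3 → ℝ) → HC :=
  fun x => ((2 * lam)⁻¹ : ℂ) • (f x * ((lam : HC) - β))

/-- Right multiplication projections `P₁^± f = ½ f (1 ± i e₁)`. -/
def P1p (f : (Fin 3 → ℝ) → HC) : (Fin 3 → ℝ) → HC :=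
  fun x => (2⁻¹ : ℂ) • (f x * (1 + (Complex.I : HC) * e1))

def P1m (f : (Fin 3 → ℝ) → HC) : (Fin 3 → ℝ) → HC :=
  fun x => (2⁻¹ : ℂ) • (f x * (1 - (Complex.I : HC) * e1))

/-!
Both `β² = λ²` and `(i e₁)² = 1` are scalar, so `S^±` and `P₁^±` are right multiplications by the
spectral idempotents of `β` (eigenvalues `±λ`) and of `i e₁` (eigenvalues `±1`). As `D` acts from
the left, it commutes with right multiplication by a constant. An idempotent `s` of `β` turns the
term `f β` of `L = D + ν + M^β` into `±λ f s`, and a further idempotent `p` of `i e₁` turns the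
scalar factor `ν ± λ` into right multiplication by `±(ν ± λ) i e₁`. Hence the four equations say
`(L f) c = 0` for the four products `c = s p`, and these products sum to `1`.
-/

attribute [simps] e1 e2 e3 pdq

lemma mul_mul_add_of_mul_eq_smul {R A : Type*} [CommSemiring R] [Semiring A] [Algebra R A]
    {b j s p : A} {μ κ : R} (hs : b * s = μ • s) (hp : p * j = κ • p) (hκ : κ * κ = 1)
    (d q : A) (n : R) :
    d * (s * p) + q * (s * p) * (algebraMap R A (κ * (n + μ)) * j) =
      (d + algebraMap R A n * q + q * b) * (s * p) := by
  have hpj : q * (s * p) * j = κ • (q * (s * p)) := by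
    rw [mul_assoc, mul_assoc s, hp, mul_smul_comm, mul_smul_comm]
  have hj : q * (s * p) * (algebraMap R A (κ * (n + μ)) * j) = (n + μ) • (q * (s * p)) := by
    rw [← Algebra.smul_def, mul_smul_comm, hpj, smul_smul, mul_right_comm, hκ, one_mul]
  have hb : q * b * (s * p) = μ • (q * (s * p)) := by
    rw [mul_assoc, ← mul_assoc b, hs, smul_mul_assoc, mul_smul_comm]
  rw [hj, add_mul, add_mul, hb, ← Algebra.smul_def, smul_mul_assoc, add_smul, add_assoc]

section SpectralIdempotents

variable {K A : Type*} [Field K] [Ring A] [Algebra K A]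

/-- For `a` with `a * a = μ ^ 2` and `2 * μ ≠ 0`, the idempotent projecting onto the
`μ`-eigenspace of multiplication by `a`. The other eigenvalue is `-μ`, so that the two signs in
`S^±` and in `P₁^±` become the two signs of `μ`. -/
def eigenIdempotent (a : A) (μ : K) : A :=
  (2 * μ)⁻¹ • (algebraMap K A μ + a)

lemma mul_eigenIdempotent {a : A} {μ : K} (ha : a * a = algebraMap K A (μ ^ 2)) :
    a * eigenIdempotent a μ = μ • eigenIdempotent a μ := by
  have hμ : a * (algebraMap K A μ + a) = μ • (algebraMap K A μ + a) := by
    rw [mul_add, ha, sq, map_mul, Algebra.smul_def, mul_add, ← Algebra.commutes, add_comm]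
  rw [eigenIdempotent, mul_smul_comm, hμ, smul_comm]

lemma eigenIdempotent_mul {a : A} {μ : K} (ha : a * a = algebraMap K A (μ ^ 2)) :
    eigenIdempotent a μ * a = μ • eigenIdempotent a μ := by
  rw [← mul_eigenIdempotent ha, eigenIdempotent, smul_mul_assoc, mul_smul_comm, add_mul, mul_add,
    Algebra.commutes]

lemma eigenIdempotent_neg (a : A) (μ : K) :
    eigenIdempotent a (-μ) = (2 * μ)⁻¹ • (algebraMap K A μ - a) := by
  rw [eigenIdempotent, mul_neg, inv_neg, neg_smul, ← smul_neg, map_neg, neg_add, neg_neg,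
    sub_eq_add_neg]

lemma eigenIdempotent_add_eigenIdempotent_neg [NeZero (2 : K)] (a : A) {μ : K} (hμ : μ ≠ 0) :
    eigenIdempotent a μ + eigenIdempotent a (-μ) = 1 := by
  have hinv : (2 * μ)⁻¹ * (2 * μ) = 1 := inv_mul_cancel₀ (mul_ne_zero two_ne_zero hμ)
  rw [eigenIdempotent_neg, eigenIdempotent, ← smul_add, add_add_sub_cancel, ← map_add, ← two_mul,
    Algebra.smul_def, ← map_mul, hinv, map_one]

lemma sum_eigenIdempotent_mul_eigenIdempotent [NeZero (2 : K)] (a b : A) {μ κ : K}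
    (hμ : μ ≠ 0) (hκ : κ ≠ 0) :
    eigenIdempotent a μ * eigenIdempotent b κ +
      eigenIdempotent a μ * eigenIdempotent b (-κ) +
      eigenIdempotent a (-μ) * eigenIdempotent b κ +
      eigenIdempotent a (-μ) * eigenIdempotent b (-κ) = 1 := by
  rw [← mul_add, add_assoc, ← mul_add, eigenIdempotent_add_eigenIdempotent_neg b hκ,
    mul_one, mul_one, eigenIdempotent_add_eigenIdempotent_neg a hμ]

end SpectralIdempotents

lemma eq_zero_iff_mul_eq_zero_of_sum_eq_one {R : Type*} [NonAssocSemiring R] {c₁ c₂ c₃ c₄ : R}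
    (hc : c₁ + c₂ + c₃ + c₄ = 1) (q : R) :
    q = 0 ↔ q * c₁ = 0 ∧ q * c₂ = 0 ∧ q * c₃ = 0 ∧ q * c₄ = 0 := by
  refine ⟨fun h => by simp only [h, zero_mul, and_self], ?_⟩
  rintro ⟨h₁, h₂, h₃, h₄⟩
  rw [← mul_one q, ← hc, mul_add, mul_add, mul_add, h₁, h₂, h₃, h₄, add_zero, add_zero, add_zero]

/-- Differentiability at a point of a biquaternion-valued function, componentwise as in `QDiffOn`
because `ℍ(ℂ)` carries no norm in Mathlib. -/
def QDiffAt (f : (Fin 3 → ℝ) → HC) (x : Fin 3 → ℝ) : Prop :=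
  DifferentiableAt ℝ (fun y => (f y).re) x ∧ DifferentiableAt ℝ (fun y => (f y).imI) x ∧
  DifferentiableAt ℝ (fun y => (f y).imJ) x ∧ DifferentiableAt ℝ (fun y => (f y).imK) x

lemma QDiffOn.qDiffAt {f : (Fin 3 → ℝ) → HC} {Ω : Set (Fin 3 → ℝ)} {x : Fin 3 → ℝ}
    (hf : QDiffOn f Ω) (hΩ : Ω ∈ nhds x) : QDiffAt f x :=
  ⟨hf.1.differentiableAt hΩ, hf.2.1.differentiableAt hΩ, hf.2.2.1.differentiableAt hΩ,
    hf.2.2.2.differentiableAt hΩ⟩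

section PartialDerivatives

variable {k : Fin 3} {x : Fin 3 → ℝ}

lemma pd_add {g h : (Fin 3 → ℝ) → ℂ} (hg : DifferentiableAt ℝ g x)
    (hh : DifferentiableAt ℝ h x) : pd k (fun y => g y + h y) x = pd k g x + pd k h x := by
  rw [pd, fderiv_fun_add hg hh, add_apply, pd, pd]

lemma pd_sub {g h : (Fin 3 → ℝ) → ℂ} (hg : DifferentiableAt ℝ g x)
    (hh : DifferentiableAt ℝ h x) : pd k (fun y => g y - h y) x = pd k g x - pd k h x := by
  rw [pd, fderiv_fun_sub hg hh, sub_apply, pd, pd]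

lemma pd_mul_const {g : (Fin 3 → ℝ) → ℂ} (hg : DifferentiableAt ℝ g x) (c : ℂ) :
    pd k (fun y => g y * c) x = pd k g x * c := by
  rw [pd, fderiv_mul_const' hg, smul_apply, pd, op_smul_eq_mul]

lemma pdq_mul_const {f : (Fin 3 → ℝ) → HC} (hf : QDiffAt f x) (c : HC) :
    pdq k (fun y => f y * c) x = pdq k f x * c := by
  obtain ⟨hre, hi, hj, hk⟩ := hf
  ext <;> simp (disch := first | assumption | fun_prop (disch := assumption)) only
    [re_pdq, imI_pdq, imJ_pdq, imK_pdq, Quaternion.re_mul,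
      Quaternion.imI_mul, Quaternion.imJ_mul, Quaternion.imK_mul, pd_add, pd_sub, pd_mul_const]

lemma Dq_mul_const {f : (Fin 3 → ℝ) → HC} (hf : QDiffAt f x) (c : HC) :
    Dq (fun y => f y * c) x = Dq f x * c := by
  simp only [Dq, pdq_mul_const hf, add_mul, mul_assoc]

end PartialDerivatives

lemma vector_mul_self (β₁ β₂ β₃ : ℂ) :
    ((β₁ : HC) * e1 + (β₂ : HC) * e2 + (β₃ : HC) * e3) *
      ((β₁ : HC) * e1 + (β₂ : HC) * e2 + (β₃ : HC) * e3) =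
      ((-(β₁ ^ 2 + β₂ ^ 2 + β₃ ^ 2) : ℂ) : HC) := by
  ext <;> simp [-Quaternion.coe_neg, -Quaternion.coe_add, -Quaternion.coe_pow] <;> ring

lemma I_mul_e1_mul_self : ((Complex.I : HC) * e1) * ((Complex.I : HC) * e1) = 1 := by
  simpa using vector_mul_self Complex.I 0 0

section Projections

variable (lam : ℂ) (β : HC) (f : (Fin 3 → ℝ) → HC)

lemma Sp_eq : Sp lam β f = fun x => f x * eigenIdempotent β lam := by
  funext x
  rw [Sp, eigenIdempotent, mul_smul_comm, Quaternion.algebraMap_def]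

lemma Sm_eq : Sm lam β f = fun x => f x * eigenIdempotent β (-lam) := by
  funext x
  rw [Sm, eigenIdempotent_neg, mul_smul_comm, Quaternion.algebraMap_def]

lemma P1p_eq : P1p f = fun x => f x * eigenIdempotent ((Complex.I : HC) * e1) (1 : ℂ) := by
  funext x
  rw [P1p, eigenIdempotent, mul_smul_comm, mul_one, map_one]

lemma P1m_eq : P1m f = fun x => f x * eigenIdempotent ((Complex.I : HC) * e1) (-1 : ℂ) := by
  funext x
  rw [P1m, eigenIdempotent_neg, mul_smul_comm, mul_one, map_one]

lemma eq_sum_P1_S {lam : ℂ} (hlam0 : lam ≠ 0) (x : Fin 3 → ℝ) :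
    f x = P1p (Sp lam β f) x + P1m (Sp lam β f) x + P1p (Sm lam β f) x + P1m (Sm lam β f) x := by
  simp only [P1p_eq, P1m_eq, Sp_eq, Sm_eq, mul_assoc]
  rw [← mul_add, ← mul_add, ← mul_add,
    sum_eigenIdempotent_mul_eigenIdempotent β _ hlam0 one_ne_zero, mul_one]

end Projections

section Splitting

/-- The operator `D + ν + M^β` of the paper, `M^β` being right multiplication by `β`. -/
def pseudoscalarDirac (ν : (Fin 3 → ℝ) → ℂ) (β : HC) (f : (Fin 3 → ℝ) → HC)
    (x : Fin 3 → ℝ) : HC :=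
  Dq f x + (ν x : HC) * f x + f x * β

variable {ν : (Fin 3 → ℝ) → ℂ} {β : HC} {lam : ℂ} {f : (Fin 3 → ℝ) → HC} {x : Fin 3 → ℝ}

lemma Dq_mul_eigenIdempotent_add {j : HC} {μ κ : ℂ} (hβ : β * β = ((μ ^ 2 : ℂ) : HC))
    (hj : j * j = 1) (hκ : κ * κ = 1) (hf : QDiffAt f x) :
    Dq (fun y => f y * (eigenIdempotent β μ * eigenIdempotent j κ)) x +
      f x * (eigenIdempotent β μ * eigenIdempotent j κ) * (((κ * (ν x + μ) : ℂ) : HC) * j) =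
      pseudoscalarDirac ν β f x * (eigenIdempotent β μ * eigenIdempotent j κ) := by
  have hjκ : j * j = algebraMap ℂ HC (κ ^ 2) := by rw [hj, sq, hκ, map_one]
  rw [Dq_mul_const hf]
  exact mul_mul_add_of_mul_eq_smul (mul_eigenIdempotent hβ) (eigenIdempotent_mul hjκ) hκ _ _ _

lemma pseudoscalarDirac_eq_zero_iff (hβ : β * β = ((lam ^ 2 : ℂ) : HC)) (hlam0 : lam ≠ 0)
    (hf : QDiffAt f x) :
    let f₁ := P1p (Sp lam β f)
    let f₂ := P1m (Sp lam β f)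
    let f₃ := P1p (Sm lam β f)
    let f₄ := P1m (Sm lam β f)
    pseudoscalarDirac ν β f x = 0 ↔
      Dq f₁ x + f₁ x * (((ν x + lam) : HC) * ((Complex.I : HC) * e1)) = 0 ∧
      Dq f₂ x - f₂ x * (((ν x + lam) : HC) * ((Complex.I : HC) * e1)) = 0 ∧
      Dq f₃ x + f₃ x * (((ν x - lam) : HC) * ((Complex.I : HC) * e1)) = 0 ∧
      Dq f₄ x - f₄ x * (((ν x - lam) : HC) * ((Complex.I : HC) * e1)) = 0 := by
  have hβ_neg : β * β = (((-lam) ^ 2 : ℂ) : HC) := by rw [hβ, neg_sq]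
  have hJ := I_mul_e1_mul_self
  have h_one : (1 : ℂ) * 1 = 1 := one_mul 1
  have h_neg : (-1 : ℂ) * -1 = 1 := by norm_num
  have hsum := sum_eigenIdempotent_mul_eigenIdempotent β ((Complex.I : HC) * e1) hlam0
    (one_ne_zero (α := ℂ))
  rw [eq_zero_iff_mul_eq_zero_of_sum_eq_one hsum,
    ← Dq_mul_eigenIdempotent_add hβ hJ h_one hf, ← Dq_mul_eigenIdempotent_add hβ hJ h_neg hf,
    ← Dq_mul_eigenIdempotent_add hβ_neg hJ h_one hf,
    ← Dq_mul_eigenIdempotent_add hβ_neg hJ h_neg hf]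
  simp only [P1p_eq, P1m_eq, Sp_eq, Sm_eq, mul_assoc (f _), one_mul,
    ← sub_eq_add_neg, Quaternion.coe_neg, Quaternion.coe_add, Quaternion.coe_sub, neg_mul, mul_neg]

end Splitting

theorem dirac_pseudoscalar_four_fold_splitting_general
    {Ω : Set (Fin 3 → ℝ)} (hΩ : IsOpen Ω) (ν : (Fin 3 → ℝ) → ℂ)
    {β : HC} {lam : ℂ} (hβ : β * β = ((lam ^ 2 : ℂ) : HC)) (hlam0 : lam ≠ 0)
    {f : (Fin 3 → ℝ) → HC} (hf : QDiffOn f Ω) :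
    let f₁ := P1p (Sp lam β f)
    let f₂ := P1m (Sp lam β f)
    let f₃ := P1p (Sm lam β f)
    let f₄ := P1m (Sm lam β f)
    ((∀ x ∈ Ω, Dq f x + (ν x : HC) * f x + f x * β = 0) ↔
      ((∀ x ∈ Ω, Dq f₁ x + f₁ x * (((ν x + lam) : HC) * ((Complex.I : HC) * e1)) = 0) ∧
       (∀ x ∈ Ω, Dq f₂ x - f₂ x * (((ν x + lam) : HC) * ((Complex.I : HC) * e1)) = 0) ∧
       (∀ x ∈ Ω, Dq f₃ x + f₃ x * (((ν x - lam) : HC) * ((Complex.I : HC) * e1)) = 0) ∧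
       (∀ x ∈ Ω, Dq f₄ x - f₄ x * (((ν x - lam) : HC) * ((Complex.I : HC) * e1)) = 0))) ∧
    (∀ x, f x = f₁ x + f₂ x + f₃ x + f₄ x) := by
  refine ⟨?_, eq_sum_P1_S β f hlam0⟩
  simp only [← forall₂_and]
  exact forall₂_congr fun x hx =>
    pseudoscalarDirac_eq_zero_iff hβ hlam0 (hf.qDiffAt (hΩ.mem_nhds hx))

/-- Proposition 1 of the paper: splitting of `D + νI + M^β` into four
operators of the form `D ± M^{(ν±λ) i e₁}` by means of the projections `P₁^± S^±`. -/
theorem dirac_pseudoscalar_four_fold_splitting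
    (Ω : Set (Fin 3 → ℝ)) (hΩ : IsOpen Ω)
    (ν : (Fin 3 → ℝ) → ℂ) (hν : ContinuousOn ν Ω)
    (β₁ β₂ β₃ lam : ℂ)
    (hβ : β₁ ^ 2 + β₂ ^ 2 + β₃ ^ 2 ≠ 0)
    (hlam : lam ^ 2 = -(β₁ ^ 2 + β₂ ^ 2 + β₃ ^ 2)) (hlam0 : lam ≠ 0)
    (f : (Fin 3 → ℝ) → HC) (hf : QDiffOn f Ω) :
    (let β : HC := (β₁ : HC) * e1 + (β₂ : HC) * e2 + (β₃ : HC) * e3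
     let f₁ := P1p (Sp lam β f)
     let f₂ := P1m (Sp lam β f)
     let f₃ := P1p (Sm lam β f)
     let f₄ := P1m (Sm lam β f)
     ((∀ x ∈ Ω, Dq f x + (ν x : HC) * f x + f x * β = 0) ↔
       ((∀ x ∈ Ω, Dq f₁ x + f₁ x * (((ν x + lam) : HC) * ((Complex.I : HC) * e1)) = 0) ∧
        (∀ x ∈ Ω, Dq f₂ x - f₂ x * (((ν x + lam) : HC) * ((Complex.I : HC) * e1)) = 0) ∧
        (∀ x ∈ Ω, Dq f₃ x + f₃ x * (((ν x - lam) : HC) * ((Complex.I : HC) * e1)) = 0) ∧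
        (∀ x ∈ Ω, Dq f₄ x - f₄ x * (((ν x - lam) : HC) * ((Complex.I : HC) * e1)) = 0))) ∧
     (∀ x ∈ Ω, Dq f x + (ν x : HC) * f x + f x * β = 0 →
        f x = f₁ x + f₂ x + f₃ x + f₄ x)) := by
  have hβ_sq := (vector_mul_self β₁ β₂ β₃).trans (congrArg _ hlam.symm)
  exact (dirac_pseudoscalar_four_fold_splitting_general hΩ ν hβ_sq hlam0 hf).imp_right
    fun h x _ _ => h x
end
end

section
/- Let Ω ⊆ ℝ³ be open, let ν : Ω → ℂ be continuous, and let β be a constant purely vectorial biquaternion with β² ≠ 0, and let λ ∈ ℂ∖{0} satisfy λ²·1 = β² (as biquaternions). Define S^± f := (1/(2λ))·f·(λ ± β). Then a differentiable function f : Ω → ℍ(ℂ) satisfies Df + νf + fβ = 0 on Ω if and only if f⁺ := S⁺f satisfies Df⁺ + (ν+λ)f⁺ = 0 on Ω and f⁻ := S⁻f satisfies Df⁻ + (ν−λ)f⁻ = 0 on Ω; moreover f = f⁺ + f⁻. -/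
noncomputable section

/-!
Right multiplication by a constant commutes with `D`, which acts from the left. The constants
`P = (λ + β) / (2λ)` and `P' = (λ - β) / (2λ)` satisfy `P + P' = 1`, `β P = λ P` and
`β P' = -λ P'`. Multiplying `D f + ν f + f β` on the right by `P` and `P'` therefore replaces `β`
by the scalars `λ` and `-λ`, and no information is lost because `P` and `P'` add up to `1`.
-/

section EigenProj

variable {K A : Type*} [Field K] [Ring A] [Algebra K A]

/-- The element `(c + b) / (2c)` of a `K`-algebra. When `b² = c²` and `2c ≠ 0`, multiplication by it
projects onto the `c`-eigenspace of multiplication by `b`; the complementary projection is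
`eigenProj (-c) b`. If `2c = 0`, its value is `0`. -/
def eigenProj (c : K) (b : A) : A :=
  (2 * c)⁻¹ • (algebraMap K A c + b)

lemma mul_eigenProj {c : K} {b : A} (h : b * b = algebraMap K A (c ^ 2)) :
    b * eigenProj c b = c • eigenProj c b := by
  have h_add : b * (algebraMap K A c + b) = c • (algebraMap K A c + b) := by
    rw [mul_add, h, ← Algebra.commutes, ← Algebra.smul_def, smul_add, sq, map_mul,
      ← Algebra.smul_def, add_comm]
  rw [eigenProj, mul_smul_comm, h_add, smul_comm]

lemma eigenProj_neg (c : K) (b : A) :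
    eigenProj (-c) b = (2 * c)⁻¹ • (algebraMap K A c - b) := by
  rw [eigenProj, mul_neg, inv_neg, map_neg, neg_smul, ← smul_neg, neg_add, neg_neg,
    ← sub_eq_add_neg]

lemma eigenProj_add_eigenProj_neg {c : K} (hc : 2 * c ≠ 0) (b : A) :
    eigenProj c b + eigenProj (-c) b = 1 := by
  rw [eigenProj_neg, eigenProj, ← smul_add, add_add_sub_cancel, ← map_add, ← two_mul,
    Algebra.algebraMap_eq_smul_one, smul_smul, inv_mul_cancel₀ hc, one_smul]

end EigenProj

/-- The four complex coordinates of a biquaternion. Mathlib puts no norm on `Quaternion ℂ`, so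
differentiability of biquaternion-valued functions is expressed through `coords`. -/
def coords : HC ≃ₗ[ℝ] (Fin 4 → ℂ) :=
  (QuaternionAlgebra.linearEquivTuple (-1 : ℂ) 0 (-1)).restrictScalars ℝ

lemma differentiableAt_coords_comp_iff {f : (Fin 3 → ℝ) → HC} {x : Fin 3 → ℝ} :
    DifferentiableAt ℝ (coords ∘ f) x ↔
      DifferentiableAt ℝ (fun y => (f y).re) x ∧ DifferentiableAt ℝ (fun y => (f y).imI) x ∧
      DifferentiableAt ℝ (fun y => (f y).imJ) x ∧ DifferentiableAt ℝ (fun y => (f y).imK) x := by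
  simp only [differentiableAt_pi, Fin.forall_fin_succ, IsEmpty.forall_iff, and_true]
  rfl

lemma QDiffOn.differentiableAt_coords {f : (Fin 3 → ℝ) → HC} {Ω : Set (Fin 3 → ℝ)}
    (hf : QDiffOn f Ω) {x : Fin 3 → ℝ} (hx : Ω ∈ nhds x) :
    DifferentiableAt ℝ (coords ∘ f) x := by
  obtain ⟨h_re, h_imI, h_imJ, h_imK⟩ := hf
  exact differentiableAt_coords_comp_iff.2 ⟨h_re.differentiableAt hx, h_imI.differentiableAt hx,
    h_imJ.differentiableAt hx, h_imK.differentiableAt hx⟩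

section Derivatives

variable {f : (Fin 3 → ℝ) → HC} {x : Fin 3 → ℝ}

lemma coords_pdq (hf : DifferentiableAt ℝ (coords ∘ f) x) (k : Fin 3) :
    coords (pdq k f x) = fderiv ℝ (coords ∘ f) x (Pi.single k 1) := by
  ext i
  have h_apply : fderiv ℝ (coords ∘ f) x (Pi.single k 1) i = pd k (fun y => coords (f y) i) x :=
    (DFunLike.congr_fun (fderiv_apply hf i) (Pi.single k 1)).symm
  rw [h_apply]
  fin_cases i <;> rfl

lemma pdq_linearMap_comp (L : HC →ₗ[ℝ] HC) (hf : DifferentiableAt ℝ (coords ∘ f) x)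
    (k : Fin 3) : pdq k (L ∘ f) x = L (pdq k f x) := by
  let M : (Fin 4 → ℂ) →L[ℝ] (Fin 4 → ℂ) := LinearMap.toContinuousLinearMap (coords.conj L)
  have h_comp : coords ∘ L ∘ f = M ∘ (coords ∘ f) := by
    ext1 y
    simp [M]
  have hLf : DifferentiableAt ℝ (coords ∘ L ∘ f) x :=
    h_comp ▸ M.differentiableAt.comp x hf
  apply coords.injective
  calc coords (pdq k (L ∘ f) x)
      = M (fderiv ℝ (coords ∘ f) x (Pi.single k 1)) := by
        rw [coords_pdq hLf, h_comp, fderiv_comp x M.differentiableAt hf, M.fderiv,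
          ContinuousLinearMap.comp_apply]
    _ = coords (L (pdq k f x)) := by
        rw [← coords_pdq hf]
        simp [M]

lemma Dq_mul_right (q : HC) (hf : DifferentiableAt ℝ (coords ∘ f) x) :
    Dq (fun y => f y * q) x = Dq f x * q := by
  have h_pdq (k : Fin 3) : pdq k (fun y => f y * q) x = pdq k f x * q :=
    -- `LinearMap.mulRight` needs `IsScalarTower ℝ HC HC`, which instance search does not find.
    pdq_linearMap_comp ((Algebra.lmul ℝ HC).toLinearMap.flip q) hf k
  simp only [Dq, h_pdq, add_mul, mul_assoc]

end Derivatives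

lemma Sp_apply (lam : ℂ) (β : HC) (f : (Fin 3 → ℝ) → HC) (x : Fin 3 → ℝ) :
    Sp lam β f x = f x * eigenProj lam β :=
  (Algebra.mul_smul_comm _ _ _).symm

lemma Sm_eq_Sp_neg (lam : ℂ) (β : HC) (f : (Fin 3 → ℝ) → HC) : Sm lam β f = Sp (-lam) β f := by
  ext1 x
  rw [Sp_apply, eigenProj_neg]
  exact (Algebra.mul_smul_comm _ _ _).symm

lemma Sp_add_Sm {lam : ℂ} (hlam0 : lam ≠ 0) (β : HC) (f : (Fin 3 → ℝ) → HC) (x : Fin 3 → ℝ) :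
    Sp lam β f x + Sm lam β f x = f x := by
  rw [Sm_eq_Sp_neg, Sp_apply, Sp_apply, ← mul_add,
    eigenProj_add_eigenProj_neg (mul_ne_zero two_ne_zero hlam0), mul_one]

lemma eq_zero_iff_Sp_and_Sm_eq_zero {lam : ℂ} (hlam0 : lam ≠ 0) (β : HC)
    (g : (Fin 3 → ℝ) → HC) (x : Fin 3 → ℝ) :
    g x = 0 ↔ Sp lam β g x = 0 ∧ Sm lam β g x = 0 := by
  refine ⟨fun h => ⟨?_, ?_⟩, fun ⟨h_plus, h_minus⟩ => ?_⟩
  · rw [Sp_apply, h, zero_mul]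
  · rw [Sm_eq_Sp_neg, Sp_apply, h, zero_mul]
  · rw [← Sp_add_Sm hlam0 β g x, h_plus, h_minus, add_zero]

/-- The Dirac operator `D + νI + M^β` with potential `ν`, where `M^β` is right multiplication
by `β`. -/
def diracOp (ν : (Fin 3 → ℝ) → ℂ) (β : HC) (f : (Fin 3 → ℝ) → HC) : (Fin 3 → ℝ) → HC :=
  fun x => Dq f x + (ν x : HC) * f x + f x * β

section Splitting

variable {lam : ℂ} {β : HC} {f : (Fin 3 → ℝ) → HC} {x : Fin 3 → ℝ}

lemma Sp_diracOp (ν : (Fin 3 → ℝ) → ℂ) (hlam : ((lam ^ 2 : ℂ) : HC) = β * β)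
    (hf : DifferentiableAt ℝ (coords ∘ f) x) :
    Sp lam β (diracOp ν β f) x =
      Dq (Sp lam β f) x + ((ν x + lam : ℂ) : HC) * Sp lam β f x := by
  have h_Dq : Dq (Sp lam β f) x = Dq f x * eigenProj lam β := by
    rw [← Dq_mul_right _ hf, ← funext (Sp_apply lam β f)]
  calc Sp lam β (diracOp ν β f) x
      = Dq f x * eigenProj lam β + ν x * (f x * eigenProj lam β)
          + f x * (β * eigenProj lam β) := by
        simp only [Sp_apply, diracOp, add_mul, mul_assoc]
    _ = Dq f x * eigenProj lam β + ν x * (f x * eigenProj lam β)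
          + lam * (f x * eigenProj lam β) := by
        rw [mul_eigenProj hlam.symm, Algebra.mul_smul_comm, Quaternion.coe_mul_eq_smul lam]
    _ = Dq (Sp lam β f) x + ((ν x + lam : ℂ) : HC) * Sp lam β f x := by
        rw [h_Dq, Sp_apply, Quaternion.coe_add, add_mul, add_assoc]

lemma Sm_diracOp (ν : (Fin 3 → ℝ) → ℂ) (hlam : ((lam ^ 2 : ℂ) : HC) = β * β)
    (hf : DifferentiableAt ℝ (coords ∘ f) x) :
    Sm lam β (diracOp ν β f) x =
      Dq (Sm lam β f) x + ((ν x - lam : ℂ) : HC) * Sm lam β f x := by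
  rw [Sm_eq_Sp_neg, Sm_eq_Sp_neg, Sp_diracOp ν (by rwa [neg_sq]) hf, ← sub_eq_add_neg]

end Splitting

theorem dirac_pseudoscalar_two_fold_splitting_general
    (Ω : Set (Fin 3 → ℝ)) (ν : (Fin 3 → ℝ) → ℂ) (β : HC)
    (lam : ℂ) (hlam0 : lam ≠ 0) (hlam : ((lam ^ 2 : ℂ) : HC) = β * β)
    (f : (Fin 3 → ℝ) → HC) (hf : ∀ x ∈ Ω, DifferentiableAt ℝ (coords ∘ f) x) :
    ((∀ x ∈ Ω, Dq f x + (ν x : HC) * f x + f x * β = 0) ↔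
      ((∀ x ∈ Ω, Dq (Sp lam β f) x + ((ν x + lam : ℂ) : HC) * Sp lam β f x = 0) ∧
       (∀ x ∈ Ω, Dq (Sm lam β f) x + ((ν x - lam : ℂ) : HC) * Sm lam β f x = 0))) ∧
    (∀ x, f x = Sp lam β f x + Sm lam β f x) := by
  refine ⟨?_, fun x => (Sp_add_Sm hlam0 β f x).symm⟩
  rw [← forall₂_and]
  refine forall₂_congr fun x hx => ?_
  rw [← Sp_diracOp ν hlam (hf x hx), ← Sm_diracOp ν hlam (hf x hx)]
  exact eq_zero_iff_Sp_and_Sm_eq_zero hlam0 β (diracOp ν β f) x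

/-- the splitting (Ps) of the paper,
`D + νI + M^β = S⁺(D + (ν+λ)I) + S⁻(D + (ν−λ)I)`:
`f` solves `Df + νf + fβ = 0` iff `f⁺ = S⁺f` solves `Df⁺ + (ν+λ)f⁺ = 0` and
`f⁻ = S⁻f` solves `Df⁻ + (ν−λ)f⁻ = 0`; moreover `f = f⁺ + f⁻`. -/
theorem dirac_pseudoscalar_two_fold_splitting
    (Ω : Set (Fin 3 → ℝ)) (hΩ : IsOpen Ω)
    (ν : (Fin 3 → ℝ) → ℂ) (hν : ContinuousOn ν Ω)
    (β : HC) (hβvec : β.re = 0) (hβ : β * β ≠ 0)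
    (lam : ℂ) (hlam0 : lam ≠ 0) (hlam : ((lam ^ 2 : ℂ) : HC) = β * β)
    (f : (Fin 3 → ℝ) → HC) (hf : QDiffOn f Ω) :
    ((∀ x ∈ Ω, Dq f x + (ν x : HC) * f x + f x * β = 0) ↔
      ((∀ x ∈ Ω, Dq (Sp lam β f) x + ((ν x + lam : ℂ) : HC) * Sp lam β f x = 0) ∧
       (∀ x ∈ Ω, Dq (Sm lam β f) x + ((ν x - lam : ℂ) : HC) * Sm lam β f x = 0))) ∧
    (∀ x, f x = Sp lam β f x + Sm lam β f x) :=
  dirac_pseudoscalar_two_fold_splitting_general Ω ν β lam hlam0 hlam f fun _ hx =>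
    hf.differentiableAt_coords (hΩ.mem_nhds hx)
end
end

section
/- Let Ω ⊆ ℝ³ be open, ε : Ω → ℝ twice differentiable with ε > 0 on Ω, and E : Ω → ℝ³ a differentiable vector field, identified with a purely vectorial ℍ(ℂ)-valued function. Set E⃗ := √ε·E and α⃗_ε := (grad √ε)/√ε (a purely vectorial function). Then E satisfies the sourceless static Maxwell system div(εE) = 0 and rot E = 0 on Ω if and only if E⃗ satisfies D E⃗ + E⃗·α⃗_ε = 0 on Ω. -/
noncomputable section

/-- Build a biquaternion from its four complex components. -/
def quat (a b c d : ℂ) : HC := ⟨a, b, c, d⟩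

/-- Partial derivative of a real-valued function on ℝ³. -/
def pdR (k : Fin 3) (g : (Fin 3 → ℝ) → ℝ) (x : Fin 3 → ℝ) : ℝ :=
  fderiv ℝ g x (Pi.single k 1)

/-!
For a nonvanishing scalar function `s` with `s² = ε`, the product rules for divergence and rotor
give

  `D (s E) + (s E) (grad s / s) = -s⁻¹ div (s² E) + s rot E`,

because the two terms `grad s × E` and `E × grad s` cancel in the vector part, while in the scalar
part `⟨grad s, E⟩` turns `div (s E)` into `s⁻¹ div (s² E)`. The scalar and vector parts of the
right-hand side vanish separately.
-/

open Matrix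
open scoped Quaternion Topology

section VectorCalculus

variable {A B : Type*}

/-- The `k`-th partial derivative of a function on ℝ³ with values in a real normed space; `pd` and
`pdR` are its instances for complex and real values. -/
def partialDeriv [NormedAddCommGroup A] [NormedSpace ℝ A] (k : Fin 3) (g : (Fin 3 → ℝ) → A)
    (x : Fin 3 → ℝ) : A :=
  fderiv ℝ g x (Pi.single k 1)

/-- The gradient of a function on ℝ³, as the triple of its partial derivatives; values in a normed
space allow real and complex functions alike. -/
def grad [NormedAddCommGroup A] [NormedSpace ℝ A] (g : (Fin 3 → ℝ) → A) (x : Fin 3 → ℝ) :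
    Fin 3 → A :=
  fun k => partialDeriv k g x

/-- The divergence of a vector field on ℝ³ whose components take values in a normed space. -/
def divergence [NormedAddCommGroup A] [NormedSpace ℝ A] (F : (Fin 3 → ℝ) → Fin 3 → A)
    (x : Fin 3 → ℝ) : A :=
  partialDeriv 0 (F · 0) x + partialDeriv 1 (F · 1) x + partialDeriv 2 (F · 2) x

/-- The rotor (curl) of a vector field on ℝ³ whose components take values in a normed space. -/
def rot [NormedAddCommGroup A] [NormedSpace ℝ A] (F : (Fin 3 → ℝ) → Fin 3 → A)
    (x : Fin 3 → ℝ) : Fin 3 → A :=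
  ![partialDeriv 1 (F · 2) x - partialDeriv 2 (F · 1) x,
    partialDeriv 2 (F · 0) x - partialDeriv 0 (F · 2) x,
    partialDeriv 0 (F · 1) x - partialDeriv 1 (F · 0) x]

section Linear

variable [NormedAddCommGroup A] [NormedSpace ℝ A] [NormedAddCommGroup B] [NormedSpace ℝ B]
  {g : (Fin 3 → ℝ) → A} {F G : (Fin 3 → ℝ) → Fin 3 → A} {x : Fin 3 → ℝ}

lemma rot_eq_zero_iff :
    rot F x = 0 ↔
      partialDeriv 1 (F · 2) x - partialDeriv 2 (F · 1) x = 0 ∧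
      partialDeriv 2 (F · 0) x - partialDeriv 0 (F · 2) x = 0 ∧
      partialDeriv 0 (F · 1) x - partialDeriv 1 (F · 0) x = 0 := by
  simp [rot, funext_iff, Fin.forall_fin_succ]

lemma divergence_congr (h : F =ᶠ[𝓝 x] G) : divergence F x = divergence G x := by
  have hk (k : Fin 3) : partialDeriv k (F · k) x = partialDeriv k (G · k) x :=
    DFunLike.congr_fun (h.fun_comp (· k)).fderiv_eq (Pi.single k 1)
  simp only [divergence, hk]

lemma partialDeriv_clm_comp (L : A →L[ℝ] B) (hg : DifferentiableAt ℝ g x) (k : Fin 3) :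
    partialDeriv k (fun y => L (g y)) x = L (partialDeriv k g x) :=
  DFunLike.congr_fun (L.hasFDerivAt.comp x hg.hasFDerivAt).fderiv (Pi.single k 1)

lemma divergence_clm_comp (L : A →L[ℝ] B) (hF : DifferentiableAt ℝ F x) :
    divergence (fun y k => L (F y k)) x = L (divergence F x) := by
  simp only [divergence, map_add, partialDeriv_clm_comp L (differentiableAt_pi.1 hF _)]

lemma rot_clm_comp (L : A →L[ℝ] B) (hF : DifferentiableAt ℝ F x) :
    rot (fun y k => L (F y k)) x = L ∘ rot F x := by
  ext i
  fin_cases i <;>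
    simp [rot, partialDeriv_clm_comp L (differentiableAt_pi.1 hF _)]

end Linear

section Product

lemma partialDeriv_mul [NormedRing A] [NormedAlgebra ℝ A] {f g : (Fin 3 → ℝ) → A} {x : Fin 3 → ℝ}
    (hf : DifferentiableAt ℝ f x) (hg : DifferentiableAt ℝ g x) (k : Fin 3) :
    partialDeriv k (fun y => f y * g y) x =
      f x * partialDeriv k g x + partialDeriv k f x * g x := by
  simp [partialDeriv, fderiv_fun_mul' hf hg]

variable [NormedCommRing A] [NormedAlgebra ℝ A]
  {g : (Fin 3 → ℝ) → A} {F : (Fin 3 → ℝ) → Fin 3 → A} {x : Fin 3 → ℝ}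

lemma divergence_smul (hg : DifferentiableAt ℝ g x) (hF : DifferentiableAt ℝ F x) :
    divergence (fun y => g y • F y) x = g x * divergence F x + grad g x ⬝ᵥ F x := by
  simp only [divergence, Pi.smul_apply, smul_eq_mul,
    partialDeriv_mul hg (differentiableAt_pi.1 hF _), grad, vec3_dotProduct]
  ring

lemma rot_smul (hg : DifferentiableAt ℝ g x) (hF : DifferentiableAt ℝ F x) :
    rot (fun y => g y • F y) x = g x • rot F x + grad g x ⨯₃ F x := by
  simp only [rot, Pi.smul_apply, smul_eq_mul,
    partialDeriv_mul hg (differentiableAt_pi.1 hF _), grad, cross_apply]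
  ext i
  fin_cases i <;> simp <;> ring

end Product

end VectorCalculus

/-- The purely vectorial biquaternion with the given components, realising the identification of
complex vectors with vectorial elements of `HC`. -/
def vectorial (v : Fin 3 → ℂ) : HC :=
  quat 0 (v 0) (v 1) (v 2)

section Biquaternion

variable (u v : Fin 3 → ℂ)

@[simp] lemma re_vectorial : (vectorial v).re = 0 := rfl

@[simp] lemma imI_vectorial : (vectorial v).imI = v 0 := rfl

@[simp] lemma imJ_vectorial : (vectorial v).imJ = v 1 := rfl

@[simp] lemma imK_vectorial : (vectorial v).imK = v 2 := rfl

lemma vectorial_add : vectorial (u + v) = vectorial u + vectorial v := by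
  ext <;> simp

lemma vectorial_mul_vectorial :
    vectorial u * vectorial v = ((-(u ⬝ᵥ v) : ℂ) : HC) + vectorial (u ⨯₃ v) := by
  ext <;> simp [vec3_dotProduct, cross_apply] <;> ring

variable {v} in
lemma coe_add_vectorial_eq_zero_iff {a : ℂ} : (a : HC) + vectorial v = 0 ↔ a = 0 ∧ v = 0 := by
  simp [Quaternion.ext_iff, funext_iff, Fin.forall_fin_succ]

lemma e1_eq_vectorial : e1 = vectorial ![1, 0, 0] := rfl

lemma e2_eq_vectorial : e2 = vectorial ![0, 1, 0] := rfl

lemma e3_eq_vectorial : e3 = vectorial ![0, 0, 1] := rfl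

lemma pdq_vectorial (k : Fin 3) (F : (Fin 3 → ℝ) → Fin 3 → ℂ) (x : Fin 3 → ℝ) :
    pdq k (fun y => vectorial (F y)) x = vectorial fun j => partialDeriv k (F · j) x := by
  ext <;> simp [pdq, pd, partialDeriv]

lemma Dq_vectorial (F : (Fin 3 → ℝ) → Fin 3 → ℂ) (x : Fin 3 → ℝ) :
    Dq (fun y => vectorial (F y)) x =
      ((-divergence F x : ℂ) : HC) + vectorial (rot F x) := by
  simp only [Dq, pdq_vectorial, e1_eq_vectorial, e2_eq_vectorial, e3_eq_vectorial]
  ext <;> simp [divergence, rot] <;> ring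

end Biquaternion

section Maxwell

variable {x : Fin 3 → ℝ}

theorem Dq_smul_add_smul_mul_inv_smul_grad {s : (Fin 3 → ℝ) → ℂ} {E : (Fin 3 → ℝ) → Fin 3 → ℂ}
    (hs : DifferentiableAt ℝ s x) (hsx : s x ≠ 0) (hE : DifferentiableAt ℝ E x) :
    Dq (fun y => vectorial (s y • E y)) x +
        vectorial (s x • E x) * vectorial ((s x)⁻¹ • grad s x) =
      ((-((s x)⁻¹ * divergence (fun y => s y ^ 2 • E y) x) : ℂ) : HC) +
        vectorial (s x • rot E x) := by
  have hdot : (s x • E x) ⬝ᵥ ((s x)⁻¹ • grad s x) = grad s x ⬝ᵥ E x := by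
    simp [hsx, dotProduct_comm]
  have hcross : (s x • E x) ⨯₃ ((s x)⁻¹ • grad s x) = -(grad s x ⨯₃ E x) := by
    simp [hsx]
  have hdiv : (s x)⁻¹ * divergence (fun y => s y ^ 2 • E y) x =
      divergence (fun y => s y • E y) x + grad s x ⬝ᵥ E x := by
    simp_rw [sq, mul_smul]
    rw [divergence_smul hs (hs.fun_smul hE), dotProduct_smul, smul_eq_mul]
    field_simp
  have hrot : s x • rot E x = rot (fun y => s y • E y) x + -(grad s x ⨯₃ E x) := by
    rw [rot_smul hs hE, add_neg_cancel_right]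
  rw [Dq_vectorial, vectorial_mul_vectorial, hdot, hcross, hdiv, hrot, vectorial_add, neg_add,
    Quaternion.coe_add]
  abel

theorem static_maxwell_quaternionic_general {ε s : (Fin 3 → ℝ) → ℂ}
    {E : (Fin 3 → ℝ) → Fin 3 → ℂ} (hsε : ∀ᶠ y in 𝓝 x, ε y = s y ^ 2)
    (hs : DifferentiableAt ℝ s x) (hsx : s x ≠ 0) (hE : DifferentiableAt ℝ E x) :
    (divergence (fun y => ε y • E y) x = 0 ∧ rot E x = 0) ↔
      Dq (fun y => vectorial (s y • E y)) x +
        vectorial (s x • E x) * vectorial ((s x)⁻¹ • grad s x) = 0 := by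
  have hεE : (fun y => ε y • E y) =ᶠ[𝓝 x] fun y => s y ^ 2 • E y :=
    hsε.mono fun y hy => congrArg (· • E y) hy
  rw [divergence_congr hεE, Dq_smul_add_smul_mul_inv_smul_grad hs hsx hE,
    coe_add_vectorial_eq_zero_iff]
  simp [hsx]

section Real

variable {ε : (Fin 3 → ℝ) → ℝ} {E : (Fin 3 → ℝ) → Fin 3 → ℝ}

lemma divergence_rot_ofReal_eq_zero_iff (hε : DifferentiableAt ℝ ε x)
    (hE : DifferentiableAt ℝ E x) :
    (divergence (fun y => (ε y : ℂ) • fun k => (E y k : ℂ)) x = 0 ∧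
        rot (fun y k => (E y k : ℂ)) x = 0) ↔
      divergence (fun y => ε y • E y) x = 0 ∧ rot E x = 0 := by
  have hdiv : divergence (fun y => (ε y : ℂ) • fun k => (E y k : ℂ)) x =
      divergence (fun y => ε y • E y) x := by
    simpa [Pi.smul_def] using divergence_clm_comp Complex.ofRealCLM (hε.fun_smul hE)
  have hrot : rot (fun y k => (E y k : ℂ)) x = Complex.ofReal ∘ rot E x :=
    rot_clm_comp Complex.ofRealCLM hE
  simp only [hdiv, hrot, funext_iff, Function.comp_apply, Pi.zero_apply, Complex.ofReal_eq_zero]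

theorem static_maxwell_quaternionic_real (hε : DifferentiableAt ℝ ε x) (hεx : 0 < ε x)
    (hE : DifferentiableAt ℝ E x) :
    (divergence (fun y => ε y • E y) x = 0 ∧ rot E x = 0) ↔
      Dq (fun y => vectorial fun k => ((√(ε y) * E y k : ℝ) : ℂ)) x +
        (vectorial fun k => ((√(ε x) * E x k : ℝ) : ℂ)) *
          (vectorial fun k => ((grad (fun y => √(ε y)) x k / √(ε x) : ℝ) : ℂ)) = 0 := by
  have hsqrt : DifferentiableAt ℝ (fun y => √(ε y)) x := hε.sqrt hεx.ne'
  have hsε : ∀ᶠ y in 𝓝 x, (ε y : ℂ) = (√(ε y) : ℂ) ^ 2 := by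
    filter_upwards [hε.continuousAt.eventually (lt_mem_nhds hεx)] with y hy
    exact_mod_cast (Real.sq_sqrt hy.le).symm
  have hs : DifferentiableAt ℝ (fun y => (√(ε y) : ℂ)) x :=
    Complex.ofRealCLM.differentiableAt.comp x hsqrt
  have hsx : (√(ε x) : ℂ) ≠ 0 := Complex.ofReal_ne_zero.2 (Real.sqrt_pos.2 hεx).ne'
  have hEC : DifferentiableAt ℝ (fun y k => (E y k : ℂ)) x :=
    differentiableAt_pi.2 fun k =>
      Complex.ofRealCLM.differentiableAt.comp x (differentiableAt_pi.1 hE k)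
  have hgrad (k : Fin 3) :
      grad (fun y => (√(ε y) : ℂ)) x k = grad (fun y => √(ε y)) x k :=
    partialDeriv_clm_comp Complex.ofRealCLM hsqrt k
  rw [← divergence_rot_ofReal_eq_zero_iff hε hE,
    static_maxwell_quaternionic_general hsε hs hsx hEC]
  simp only [hgrad, Pi.smul_def, smul_eq_mul, Complex.ofReal_mul, Complex.ofReal_inv,
    div_eq_inv_mul]

end Real

end Maxwell

/-- the sourceless static Maxwell system `div(εE) = 0`, `rot E = 0`
is equivalent to `D E⃗ + E⃗·α⃗_ε = 0` for `E⃗ = √ε·E` and `α⃗_ε = (grad √ε)/√ε`. -/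
theorem static_maxwell_quaternionic
    (Ω : Set (Fin 3 → ℝ)) (hΩ : IsOpen Ω)
    (ε : (Fin 3 → ℝ) → ℝ) (hε : ContDiffOn ℝ 2 ε Ω) (hεpos : ∀ x ∈ Ω, 0 < ε x)
    (E1 E2 E3 : (Fin 3 → ℝ) → ℝ)
    (hE1 : DifferentiableOn ℝ E1 Ω) (hE2 : DifferentiableOn ℝ E2 Ω)
    (hE3 : DifferentiableOn ℝ E3 Ω) :
    (let sq : (Fin 3 → ℝ) → ℝ := fun y => Real.sqrt (ε y)
     let Ev : (Fin 3 → ℝ) → HC := fun y =>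
       quat 0 ((sq y * E1 y : ℝ) : ℂ) ((sq y * E2 y : ℝ) : ℂ) ((sq y * E3 y : ℝ) : ℂ)
     let αε : (Fin 3 → ℝ) → HC := fun y =>
       quat 0 ((pdR 0 sq y / sq y : ℝ) : ℂ) ((pdR 1 sq y / sq y : ℝ) : ℂ)
         ((pdR 2 sq y / sq y : ℝ) : ℂ)
     (∀ x ∈ Ω,
        (pdR 0 (fun y => ε y * E1 y) x + pdR 1 (fun y => ε y * E2 y) x +
            pdR 2 (fun y => ε y * E3 y) x = 0) ∧
        (pdR 1 E3 x - pdR 2 E2 x = 0) ∧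
        (pdR 2 E1 x - pdR 0 E3 x = 0) ∧
        (pdR 0 E2 x - pdR 1 E1 x = 0)) ↔
     (∀ x ∈ Ω, Dq Ev x + Ev x * αε x = 0)) := by
  refine forall₂_congr fun x hx => ?_
  have hxΩ : Ω ∈ 𝓝 x := hΩ.mem_nhds hx
  have hεx : DifferentiableAt ℝ ε x := (hε.differentiableOn two_ne_zero).differentiableAt hxΩ
  have hEx : DifferentiableAt ℝ (fun y => ![E1 y, E2 y, E3 y]) x :=
    differentiableAt_pi.2 (by
      simp [Fin.forall_fin_succ, hE1.differentiableAt hxΩ, hE2.differentiableAt hxΩ,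
        hE3.differentiableAt hxΩ])
  -- Both sides unfold definitionally to the real pointwise form for the triple `![E1, E2, E3]`.
  exact (and_congr_right' rot_eq_zero_iff).symm.trans
    (static_maxwell_quaternionic_real hεx (hεpos x hx) hEx)
end
end

section
/- Let Ω ⊆ ℝ³ be open, v : Ω → ℂ continuous, and φ : Ω → ℂ a twice differentiable nonvanishing scalar function satisfying the Schrödinger equation −Δφ + vφ = 0 on Ω. Then the purely vectorial function α := (∇φ)/φ = ((∂₁φ)e₁ + (∂₂φ)e₂ + (∂₃φ)e₃)/φ satisfies the quaternionic Riccati equation Dα + α² = −v on Ω. -/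
noncomputable section

/-- The gradient `∇g = (∂₁g)e₁ + (∂₂g)e₂ + (∂₃g)e₃` of a scalar function, as a purely vectorial
biquaternion; it is the Moisil–Theodoresco operator applied to `g`. -/
def gradq (g : (Fin 3 → ℝ) → ℂ) (x : Fin 3 → ℝ) : HC :=
  quat 0 (pd 0 g x) (pd 1 g x) (pd 2 g x)

section PartialDerivatives

variable {g h : (Fin 3 → ℝ) → ℂ} {x : Fin 3 → ℝ}

lemma pd_const (c : ℂ) (k : Fin 3) : pd k (fun _ => c) x = 0 := by
  simp [pd]

lemma pd_mul (hg : DifferentiableAt ℝ g x) (hh : DifferentiableAt ℝ h x) (k : Fin 3) :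
    pd k (fun y => g y * h y) x = pd k g x * h x + g x * pd k h x := by
  simp only [pd, fderiv_fun_mul hg hh, add_apply, smul_apply, smul_eq_mul]
  ring

lemma pd_inv (hg : DifferentiableAt ℝ g x) (hx : g x ≠ 0) (k : Fin 3) :
    pd k (fun y => (g y)⁻¹) x = -(g x ^ 2)⁻¹ * pd k g x := by
  have hinv : HasFDerivAt (fun y => (g y)⁻¹) _ x :=
    (hasDerivAt_inv hx).comp_hasFDerivAt x hg.hasFDerivAt
  simp only [pd, hinv.fderiv, smul_apply, smul_eq_mul]

lemma differentiableAt_pd (hg : DifferentiableAt ℝ (fderiv ℝ g) x) (k : Fin 3) :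
    DifferentiableAt ℝ (pd k g) x :=
  hg.clm_apply (differentiableAt_const _)

lemma pd_pd (hg : DifferentiableAt ℝ (fderiv ℝ g) x) (j k : Fin 3) :
    pd k (pd j g) x = fderiv ℝ (fderiv ℝ g) x (Pi.single k 1) (Pi.single j 1) := by
  change fderiv ℝ (fun y => fderiv ℝ g y (Pi.single j 1)) x (Pi.single k 1) = _
  simp [fderiv_clm_apply hg (differentiableAt_const _)]

lemma pd_comm (hg : ∀ᶠ y in nhds x, DifferentiableAt ℝ g y)
    (hg' : DifferentiableAt ℝ (fderiv ℝ g) x) (j k : Fin 3) :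
    pd k (pd j g) x = pd j (pd k g) x := by
  rw [pd_pd hg', pd_pd hg']
  exact second_derivative_symmetric_of_eventually (hg.mono fun _ => DifferentiableAt.hasFDerivAt)
    hg'.hasFDerivAt _ _

end PartialDerivatives

section Components

variable (a b c d : ℂ)

@[simp] lemma re_quat : (quat a b c d).re = a := rfl

@[simp] lemma imI_quat : (quat a b c d).imI = b := rfl

@[simp] lemma imJ_quat : (quat a b c d).imJ = c := rfl

@[simp] lemma imK_quat : (quat a b c d).imK = d := rfl

lemma e1_eq_quat : e1 = quat 0 1 0 0 := rfl

lemma e2_eq_quat : e2 = quat 0 0 1 0 := rfl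

lemma e3_eq_quat : e3 = quat 0 0 0 1 := rfl

lemma pdq_eq_quat (k : Fin 3) (f : (Fin 3 → ℝ) → HC) (x : Fin 3 → ℝ) :
    pdq k f x = quat (pd k (fun y => (f y).re) x) (pd k (fun y => (f y).imI) x)
      (pd k (fun y => (f y).imJ) x) (pd k (fun y => (f y).imK) x) :=
  rfl

end Components

section MoisilTheodoresco

variable {f : (Fin 3 → ℝ) → HC} {g φ : (Fin 3 → ℝ) → ℂ} {x : Fin 3 → ℝ}

lemma mul_coe_mul_left_comm (a b : HC) (c : ℂ) : a * ((c : HC) * b) = (c : HC) * (a * b) :=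
  (Quaternion.coe_commute c a).symm.left_comm b

variable (g x) in
lemma gradq_eq_sum :
    gradq g x = (pd 0 g x : HC) * e1 + (pd 1 g x : HC) * e2 + (pd 2 g x : HC) * e3 := by
  ext <;> simp [gradq, e1_eq_quat, e2_eq_quat, e3_eq_quat]

variable (g x) in
lemma inv_mul_gradq :
    (((g x)⁻¹ : ℂ) : HC) * gradq g x =
      quat 0 (pd 0 g x / g x) (pd 1 g x / g x) (pd 2 g x / g x) := by
  ext <;> simp [gradq, div_eq_inv_mul]

lemma gradq_inv (hg : DifferentiableAt ℝ g x) (hx : g x ≠ 0) :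
    gradq (fun y => (g y)⁻¹) x = ((-(g x ^ 2)⁻¹ : ℂ) : HC) * gradq g x := by
  simp only [gradq_eq_sum, pd_inv hg hx, Quaternion.coe_mul, mul_add, mul_assoc]

lemma qDiffAt_gradq (hg : DifferentiableAt ℝ (fderiv ℝ g) x) : QDiffAt (gradq g) x :=
  ⟨differentiableAt_const 0, differentiableAt_pd hg 0, differentiableAt_pd hg 1,
    differentiableAt_pd hg 2⟩

lemma pdq_coe_mul (hg : DifferentiableAt ℝ g x) (hf : QDiffAt f x) (k : Fin 3) :
    pdq k (fun y => (g y : HC) * f y) x = (pd k g x : HC) * f x + (g x : HC) * pdq k f x := by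
  obtain ⟨hre, hI, hJ, hK⟩ := hf
  ext <;> simp [pdq_eq_quat, pd_mul hg hre, pd_mul hg hI, pd_mul hg hJ, pd_mul hg hK]

lemma Dq_coe_mul (hg : DifferentiableAt ℝ g x) (hf : QDiffAt f x) :
    Dq (fun y => (g y : HC) * f y) x = gradq g x * f x + (g x : HC) * Dq f x := by
  simp only [Dq, pdq_coe_mul hg hf, gradq_eq_sum, mul_add, add_mul, mul_coe_mul_left_comm,
    mul_assoc]
  abel

lemma Dq_gradq (hg : ∀ᶠ y in nhds x, DifferentiableAt ℝ g y)
    (hg' : DifferentiableAt ℝ (fderiv ℝ g) x) :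
    Dq (gradq g) x = -(lap g x : HC) := by
  have hpdq (k : Fin 3) :
      pdq k (gradq g) x = quat 0 (pd k (pd 0 g) x) (pd k (pd 1 g) x) (pd k (pd 2 g) x) := by
    simp [pdq_eq_quat, gradq, pd_const]
  have h01 := pd_comm hg hg' 0 1
  have h02 := pd_comm hg hg' 0 2
  have h12 := pd_comm hg hg' 1 2
  ext <;> simp [Dq, hpdq, e1_eq_quat, e2_eq_quat, e3_eq_quat, lap, h01, h02, h12,
    sub_eq_add_neg, add_assoc, add_comm]

lemma Dq_inv_mul_gradq (hφ : ∀ᶠ y in nhds x, DifferentiableAt ℝ φ y)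
    (hφ' : DifferentiableAt ℝ (fderiv ℝ φ) x) (hx : φ x ≠ 0) :
    Dq (fun y => (((φ y)⁻¹ : ℂ) : HC) * gradq φ y) x =
      -((((φ x)⁻¹ : ℂ) : HC) * gradq φ x) ^ 2 - ((lap φ x / φ x : ℂ) : HC) := by
  have hφx : DifferentiableAt ℝ φ x := hφ.self_of_nhds
  calc Dq (fun y => (((φ y)⁻¹ : ℂ) : HC) * gradq φ y) x
      = gradq (fun y => (φ y)⁻¹) x * gradq φ x + (((φ x)⁻¹ : ℂ) : HC) * Dq (gradq φ) x :=
        Dq_coe_mul (hφx.inv hx) (qDiffAt_gradq hφ')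
    _ = ((-(φ x ^ 2)⁻¹ : ℂ) : HC) * gradq φ x * gradq φ x +
          (((φ x)⁻¹ : ℂ) : HC) * -(lap φ x : HC) := by
        rw [gradq_inv hφx hx, Dq_gradq hφ hφ']
    _ = -((((φ x)⁻¹ : ℂ) : HC) * gradq φ x) ^ 2 - ((lap φ x / φ x : ℂ) : HC) := by
        rw [(Quaternion.coe_commute _ _).mul_pow, ← Quaternion.coe_pow, inv_pow,
          Quaternion.coe_neg, div_eq_inv_mul, Quaternion.coe_mul]
        noncomm_ring

end MoisilTheodoresco

theorem riccati_from_schroedinger_general {φ : (Fin 3 → ℝ) → ℂ} {x : Fin 3 → ℝ} {v : ℂ}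
    (hφ : ∀ᶠ y in nhds x, DifferentiableAt ℝ φ y) (hφ' : DifferentiableAt ℝ (fderiv ℝ φ) x)
    (hφ0 : φ x ≠ 0) (hSch : -lap φ x + v * φ x = 0) :
    Dq (fun y => quat 0 (pd 0 φ y / φ y) (pd 1 φ y / φ y) (pd 2 φ y / φ y)) x +
        quat 0 (pd 0 φ x / φ x) (pd 1 φ x / φ x) (pd 2 φ x / φ x) *
          quat 0 (pd 0 φ x / φ x) (pd 1 φ x / φ x) (pd 2 φ x / φ x) =
      -(v : HC) := by
  have hv : lap φ x / φ x = v := by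
    rw [div_eq_iff hφ0]
    linear_combination -hSch
  have hRiccati := Dq_inv_mul_gradq hφ hφ' hφ0
  rw [hv] at hRiccati
  simp only [← inv_mul_gradq, hRiccati]
  noncomm_ring

/-- if `φ` is a nonvanishing solution of the Schrödinger equation
`−Δφ + vφ = 0`, then `α = ∇φ/φ` solves the quaternionic Riccati equation `Dα + α² = −v`. -/
theorem riccati_from_schroedinger
    (Ω : Set (Fin 3 → ℝ)) (hΩ : IsOpen Ω)
    (v : (Fin 3 → ℝ) → ℂ) (hv : ContinuousOn v Ω)
    (φ : (Fin 3 → ℝ) → ℂ) (hφ : ContDiffOn ℝ 2 φ Ω)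
    (hφ0 : ∀ x ∈ Ω, φ x ≠ 0)
    (hSch : ∀ x ∈ Ω, -lap φ x + v x * φ x = 0) :
    ∀ x ∈ Ω,
      Dq (fun y => quat 0 (pd 0 φ y / φ y) (pd 1 φ y / φ y) (pd 2 φ y / φ y)) x +
        quat 0 (pd 0 φ x / φ x) (pd 1 φ x / φ x) (pd 2 φ x / φ x) *
          quat 0 (pd 0 φ x / φ x) (pd 1 φ x / φ x) (pd 2 φ x / φ x) =
      -((v x : ℂ) : HC) :=
  fun x hx =>
    have hΩx : Ω ∈ nhds x := hΩ.mem_nhds hx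
    riccati_from_schroedinger_general
      ((hφ.differentiableOn two_ne_zero).eventually_differentiableAt hΩx)
      (((hφ.contDiffAt hΩx).fderiv_right one_add_one_eq_two.le).differentiableAt one_ne_zero)
      (hφ0 x hx) (hSch x hx)
end
end
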